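/- Let F be a probability measure on [0,∞) with ∫₀^∞ x dF(x) ≤ 𝖲, and set β_F := −ln( ∫₀^∞ e^{−x} dF(x) ). Then for every x ≥ 0, the marginal entropy h(x;F) := −∫₀^∞ K(x,y) · ln f(y;F) dy satisfies 0 ≤ h(x;F) ≤ (x + 𝖨 + 1) + 𝖨 + β_F. -/

import Mathlib

open MeasureTheory Real Filter Topology

noncomputable def besselI0 (r : ℝ) : ℝ :=
  (1 / (2 * π)) * ∫ t in (0:ℝ)..(2 * π), Real.exp (r * Real.cos t)

noncomputable def K (I x y : ℝ) : ℝ :=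
  (1 / (2 * π)) * ∫ θ in (-π)..π,
    Real.exp (-(y + x + I - 2 * Real.sqrt (y * x) * Real.cos θ)) *
      besselI0 (2 * Real.sqrt (I * (y + x - 2 * Real.sqrt (y * x) * Real.cos θ)))

noncomputable def outDen (I : ℝ) (F : Measure ℝ) (y : ℝ) : ℝ :=
  ∫ x, K I x y ∂F

noncomputable def outEnt (I : ℝ) (F : Measure ℝ) : ℝ :=
  -∫ y in Set.Ioi (0:ℝ), outDen I F y * Real.log (outDen I F y)

noncomputable def margEnt (I : ℝ) (F : Measure ℝ) (x : ℝ) : ℝ :=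
  -∫ y in Set.Ioi (0:ℝ), K I x y * Real.log (outDen I F y)

/-! For independent `U` uniform on the unit circle and `Z` standard complex Gaussian, `K I x` is
the density of `‖√x + √I * U + Z‖ ^ 2`: it arises from the density `exp (-r)` of `‖Z‖ ^ 2` by
translating a rotation-invariant planar density twice, by `√I` and then by `√x`. Translation
by `√a` replaces the density at each point by an average over a circle. It therefore preserves
upper bounds by constants, and it turns a lower bound `b * exp (-r)` into
`b * exp (-a) * exp (-r)`, because `1 ≤ I₀`; hence `exp (-(I + x + y)) ≤ K I x y ≤ 1`. It
preserves the total mass and raises the mean by `a`: averaging `‖w + √a‖ ^ 2` over `w` and `-w`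
gives `‖w‖ ^ 2 + a` by the parallelogram law. Hence `K I x` has mass `1` and mean `x + I + 1`.
Integrating the pointwise bounds against `F` gives `0 ≤ -log (outDen I F y) ≤ y + I + β`, where
`β = -log ∫ exp (-t) dF(t)`, and integrating these against `K I x` gives the two bounds on the
entropy. -/

open scoped ENNReal

lemma lintegral_comp_sq_Ioi (g : ℝ → ℝ≥0∞) :
    ∫⁻ r in Set.Ioi (0 : ℝ), ENNReal.ofReal (2 * r) * g (r ^ 2) = ∫⁻ y in Set.Ioi (0 : ℝ), g y := by
  have himage : (fun r : ℝ ↦ r ^ 2) '' Set.Ioi 0 = Set.Ioi 0 :=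
    Set.Subset.antisymm (Set.image_subset_iff.2 fun r (hr : 0 < r) ↦ pow_pos hr 2)
      fun y hy ↦ ⟨√y, Real.sqrt_pos.2 hy, Real.sq_sqrt (le_of_lt hy)⟩
  have hmono : MonotoneOn (fun r : ℝ ↦ r ^ 2) (Set.Ioi 0) :=
    (pow_left_strictMonoOn₀ two_ne_zero).monotoneOn.mono Set.Ioi_subset_Ici_self
  rw [← lintegral_image_eq_lintegral_deriv_mul_of_monotoneOn measurableSet_Ioi
    (fun r _ ↦ by simpa using (hasDerivAt_pow 2 r).hasDerivWithinAt) hmono, himage]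

lemma circleMap_zero_eq_polarCoord_symm (r θ : ℝ) :
    circleMap 0 r θ = Complex.polarCoord.symm (r, θ) := by
  simp [circleMap_zero, Complex.polarCoord_symm_apply, Complex.exp_mul_I]

lemma circleAverage_eq_integral_neg_pi_pi {E : Type*} [NormedAddCommGroup E] [NormedSpace ℝ E]
    (f : ℂ → E) (c : ℂ) (r : ℝ) :
    circleAverage f c r = (2 * π)⁻¹ • ∫ θ in (-π)..π, f (circleMap c r θ) := by
  rw [circleAverage_eq_integral_add (-π),
    intervalIntegral.integral_comp_add_right (fun θ ↦ f (circleMap c r θ)), zero_add,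
    show 2 * π + -π = π by ring]

lemma ofReal_circleAverage {φ : ℂ → ℝ} (hφ : Continuous φ) (hφ₀ : 0 ≤ φ) (r : ℝ) :
    ENNReal.ofReal (circleAverage φ 0 r) = ENNReal.ofReal (2 * π)⁻¹ *
      ∫⁻ θ in Set.Ioo (-π) π, ENNReal.ofReal (φ (Complex.polarCoord.symm (r, θ))) := by
  have hcont : Continuous fun θ ↦ φ (circleMap 0 r θ) := by fun_prop
  simp only [← circleMap_zero_eq_polarCoord_symm]
  rw [circleAverage_eq_integral_neg_pi_pi, smul_eq_mul, ENNReal.ofReal_mul (by positivity),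
    intervalIntegral.integral_of_le (by linarith [pi_pos]), integral_Ioc_eq_integral_Ioo,
    ofReal_integral_eq_lintegral_ofReal (hcont.integrableOn_Icc.mono_set Set.Ioo_subset_Icc_self)
      (ae_of_all _ fun θ ↦ hφ₀ _)]

lemma lintegral_circleAverage_sqrt_mul {φ : ℂ → ℝ} (hφ : Continuous φ) (hφ₀ : 0 ≤ φ)
    {g : ℝ → ℝ≥0∞} (hg : Measurable g) :
    ∫⁻ y in Set.Ioi (0 : ℝ), ENNReal.ofReal (circleAverage φ 0 √y) * g y =
      ENNReal.ofReal π⁻¹ * ∫⁻ w, ENNReal.ofReal (φ w) * g (‖w‖ ^ 2) := by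
  have hpolar : Continuous fun p : ℝ × ℝ ↦ Complex.polarCoord.symm p := by
    simp only [Complex.polarCoord_symm_apply]
    fun_prop
  rw [← lintegral_comp_sq_Ioi, ← Complex.lintegral_comp_polarCoord_symm, polarCoord_target,
    Measure.volume_eq_prod, ← Measure.prod_restrict, lintegral_prod _ (by fun_prop),
    ← lintegral_const_mul' _ _ ENNReal.ofReal_ne_top]
  refine setLIntegral_congr_fun measurableSet_Ioi fun r hr ↦ ?_
  have hr₀ : (0 : ℝ) ≤ r := le_of_lt hr
  have hconst : ENNReal.ofReal (2 * r) * ENNReal.ofReal (2 * π)⁻¹ =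
      ENNReal.ofReal π⁻¹ * ENNReal.ofReal r := by
    rw [← ENNReal.ofReal_mul (by positivity), ← ENNReal.ofReal_mul (by positivity)]
    congr 1
    field_simp
  simp only [Complex.norm_polarCoord_symm, sq_abs, smul_eq_mul, Real.sqrt_sq hr₀,
    ofReal_circleAverage hφ hφ₀]
  rw [lintegral_const_mul' _ _ ENNReal.ofReal_ne_top,
    lintegral_mul_const _ (by fun_prop)]
  simp only [← mul_assoc, hconst]

section Translation

variable {E : Type*} [NormedAddCommGroup E] [InnerProductSpace ℝ E]

lemma enorm_add_sq_add_enorm_sub_sq (v w : E) :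
    ‖v + w‖ₑ ^ 2 + ‖v - w‖ₑ ^ 2 = 2 * (‖v‖ₑ ^ 2 + ‖w‖ₑ ^ 2) := by
  simp only [enorm_eq_nnnorm]
  norm_cast
  ext
  push_cast
  simpa only [sq] using parallelogram_law_with_norm ℝ v w

lemma lintegral_comp_sub_mul_enorm_sq [MeasurableSpace E] [BorelSpace E] (μ : Measure E)
    [μ.IsAddLeftInvariant] [μ.IsNegInvariant] {φ : E → ℝ≥0∞} (hφ : Measurable φ)
    (hφ_even : φ.Even) (a : E) :
    ∫⁻ w, φ (w - a) * ‖w‖ₑ ^ 2 ∂μ =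
      ∫⁻ w, φ w * ‖w‖ₑ ^ 2 ∂μ + (∫⁻ w, φ w ∂μ) * ‖a‖ₑ ^ 2 := by
  have htranslate : ∫⁻ w, φ (w - a) * ‖w‖ₑ ^ 2 ∂μ = ∫⁻ w, φ w * ‖w + a‖ₑ ^ 2 ∂μ := by
    simpa using (lintegral_add_right_eq_self (μ := μ) (fun w ↦ φ (w - a) * ‖w‖ₑ ^ 2) a).symm
  have hreflect : ∫⁻ w, φ w * ‖w + a‖ₑ ^ 2 ∂μ = ∫⁻ w, φ w * ‖w - a‖ₑ ^ 2 ∂μ := by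
    rw [← lintegral_neg_eq_self]
    simp only [hφ_even _, neg_add_eq_sub, enorm_sub_rev]
  rw [htranslate, ← ENNReal.mul_right_inj two_ne_zero ENNReal.ofNat_ne_top]
  calc 2 * ∫⁻ w, φ w * ‖w + a‖ₑ ^ 2 ∂μ
      = ∫⁻ w, φ w * ‖w + a‖ₑ ^ 2 + φ w * ‖w - a‖ₑ ^ 2 ∂μ := by
        rw [lintegral_add_left (by fun_prop), ← hreflect, two_mul]
    _ = ∫⁻ w, 2 * (φ w * ‖w‖ₑ ^ 2 + φ w * ‖a‖ₑ ^ 2) ∂μ :=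
        lintegral_congr fun w ↦ by
          rw [← mul_add, ← mul_add, enorm_add_sq_add_enorm_sub_sq, mul_left_comm]
    _ = 2 * (∫⁻ w, φ w * ‖w‖ₑ ^ 2 ∂μ + (∫⁻ w, φ w ∂μ) * ‖a‖ₑ ^ 2) := by
        rw [lintegral_const_mul _ (by fun_prop), lintegral_add_left (by fun_prop),
          lintegral_mul_const _ hφ]

end Translation

/-- If a random point of the plane has the rotation-invariant density `ψ (‖w‖ ^ 2) / π`, then
`radialShift a ψ` is the density on `[0, ∞)` of its squared modulus after a translation by `√a`.
It is written as an average over the circle `‖w‖ = √y`, so it is meaningful for `0 ≤ a`, `0 ≤ y`. -/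
noncomputable def radialShift (a : ℝ) (ψ : ℝ → ℝ) (y : ℝ) : ℝ :=
  circleAverage (fun w ↦ ψ (‖w - (√a : ℂ)‖ ^ 2)) 0 √y

section RadialShift

variable {a y : ℝ} {ψ : ℝ → ℝ}

lemma continuous_radialShift (a : ℝ) (hψ : Continuous ψ) : Continuous (radialShift a ψ) := by
  unfold radialShift
  fun_prop

lemma circleIntegrable_comp_norm_sub_sq (hψ : Continuous ψ) (z : ℂ) (R : ℝ) :
    CircleIntegrable (fun w ↦ ψ (‖w - z‖ ^ 2)) 0 R :=
  ContinuousOn.circleIntegrable' (by fun_prop)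

lemma radialShift_zero_left (hy : 0 ≤ y) : radialShift 0 ψ y = ψ y := by
  refine circleAverage_const_on_circle fun w hw ↦ ?_
  rw [mem_sphere_zero_iff_norm, abs_of_nonneg (Real.sqrt_nonneg y)] at hw
  simp [hw, Real.sq_sqrt hy]

lemma radialShift_nonneg (hψ₀ : ∀ r, 0 ≤ r → 0 ≤ ψ r) : 0 ≤ radialShift a ψ y :=
  circleAverage_nonneg_of_nonneg fun _ _ ↦ hψ₀ _ (sq_nonneg _)

lemma radialShift_le {b : ℝ} (hψ : Continuous ψ) (hb : ∀ r, 0 ≤ r → ψ r ≤ b) :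
    radialShift a ψ y ≤ b :=
  circleAverage_mono_on_of_le_circle (circleIntegrable_comp_norm_sub_sq hψ _ _)
    fun _ _ ↦ hb _ (sq_nonneg _)

lemma lintegral_radialShift_mul (a : ℝ) (hψ : Continuous ψ) (hψ₀ : ∀ r, 0 ≤ r → 0 ≤ ψ r)
    {g : ℝ → ℝ≥0∞} (hg : Measurable g) :
    ∫⁻ y in Set.Ioi (0 : ℝ), ENNReal.ofReal (radialShift a ψ y) * g y =
      ENNReal.ofReal π⁻¹ *
        ∫⁻ w : ℂ, ENNReal.ofReal (ψ (‖w - (√a : ℂ)‖ ^ 2)) * g (‖w‖ ^ 2) :=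
  lintegral_circleAverage_sqrt_mul (by fun_prop) (fun _ ↦ hψ₀ _ (sq_nonneg _)) hg

lemma lintegral_comp_norm_sq_mul (hψ : Continuous ψ) (hψ₀ : ∀ r, 0 ≤ r → 0 ≤ ψ r)
    {g : ℝ → ℝ≥0∞} (hg : Measurable g) :
    ENNReal.ofReal π⁻¹ * ∫⁻ w : ℂ, ENNReal.ofReal (ψ (‖w‖ ^ 2)) * g (‖w‖ ^ 2) =
      ∫⁻ y in Set.Ioi (0 : ℝ), ENNReal.ofReal (ψ y) * g y := by
  have h := lintegral_radialShift_mul 0 hψ hψ₀ hg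
  simp only [Real.sqrt_zero, Complex.ofReal_zero, sub_zero] at h
  rw [← h]
  exact setLIntegral_congr_fun measurableSet_Ioi fun y hy ↦ by
    rw [radialShift_zero_left (le_of_lt hy)]

lemma lintegral_radialShift (a : ℝ) (hψ : Continuous ψ) (hψ₀ : ∀ r, 0 ≤ r → 0 ≤ ψ r) :
    ∫⁻ y in Set.Ioi (0 : ℝ), ENNReal.ofReal (radialShift a ψ y) =
      ∫⁻ y in Set.Ioi (0 : ℝ), ENNReal.ofReal (ψ y) := by
  have hshift := lintegral_radialShift_mul a hψ hψ₀ measurable_one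
  have hradial := lintegral_comp_norm_sq_mul hψ hψ₀ measurable_one
  simp only [Pi.one_apply, mul_one] at hshift hradial
  rw [hshift, ← hradial,
    lintegral_sub_right_eq_self (fun w : ℂ ↦ ENNReal.ofReal (ψ (‖w‖ ^ 2)))]

lemma lintegral_radialShift_mul_id (ha : 0 ≤ a) (hψ : Continuous ψ)
    (hψ₀ : ∀ r, 0 ≤ r → 0 ≤ ψ r) :
    ∫⁻ y in Set.Ioi (0 : ℝ), ENNReal.ofReal (radialShift a ψ y) * ENNReal.ofReal y =
      (∫⁻ y in Set.Ioi (0 : ℝ), ENNReal.ofReal (ψ y) * ENNReal.ofReal y) +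
        (∫⁻ y in Set.Ioi (0 : ℝ), ENNReal.ofReal (ψ y)) * ENNReal.ofReal a := by
  have henorm (w : ℂ) : ENNReal.ofReal (‖w‖ ^ 2) = ‖w‖ₑ ^ 2 := by
    rw [ENNReal.ofReal_pow (norm_nonneg w), ofReal_norm]
  have hsqrt : ‖(√a : ℂ)‖ₑ ^ 2 = ENNReal.ofReal a := by
    rw [← henorm, Complex.norm_of_nonneg (Real.sqrt_nonneg a), Real.sq_sqrt ha]
  have hmass := lintegral_comp_norm_sq_mul hψ hψ₀ measurable_one
  simp only [Pi.one_apply, mul_one] at hmass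
  rw [lintegral_radialShift_mul a hψ hψ₀ ENNReal.measurable_ofReal, ← hmass,
    ← lintegral_comp_norm_sq_mul hψ hψ₀ ENNReal.measurable_ofReal]
  simp only [henorm, mul_assoc]
  rw [← hsqrt, ← mul_add, lintegral_comp_sub_mul_enorm_sq volume
    (φ := fun w : ℂ ↦ ENNReal.ofReal (ψ (‖w‖ ^ 2))) (by fun_prop) fun w ↦ by simp only [norm_neg]]

lemma norm_circleMap_sub_sqrt_sq (ha : 0 ≤ a) (hy : 0 ≤ y) (θ : ℝ) :
    ‖circleMap 0 √y θ - (√a : ℂ)‖ ^ 2 = y + a - 2 * √(y * a) * Real.cos θ := by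
  rw [← Complex.normSq_eq_norm_sq, Complex.normSq_apply, Real.sqrt_mul hy]
  simp only [circleMap_zero, Complex.exp_mul_I, Complex.sub_re, Complex.sub_im,
    Complex.re_ofReal_mul, Complex.im_ofReal_mul, Complex.add_re, Complex.add_im,
    Complex.cos_ofReal_re, Complex.cos_ofReal_im, Complex.sin_ofReal_re, Complex.sin_ofReal_im,
    Complex.mul_I_re, Complex.mul_I_im, Complex.ofReal_re, Complex.ofReal_im]
  linear_combination Real.sq_sqrt hy + Real.sq_sqrt ha + √y ^ 2 * Real.sin_sq_add_cos_sq θ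

lemma radialShift_exp_neg (ha : 0 ≤ a) (hy : 0 ≤ y) :
    radialShift a (fun r ↦ Real.exp (-r)) y =
      Real.exp (-(y + a)) * besselI0 (2 * √(a * y)) := by
  have hexp (θ : ℝ) : Real.exp (-‖circleMap 0 √y θ - (√a : ℂ)‖ ^ 2) =
      Real.exp (-(y + a)) * Real.exp (2 * √(a * y) * Real.cos θ) := by
    rw [norm_circleMap_sub_sqrt_sq ha hy, ← Real.exp_add, mul_comm y a]
    ring_nf
  simp only [radialShift, circleAverage_def, hexp, intervalIntegral.integral_const_mul, besselI0,
    smul_eq_mul, one_div, mul_left_comm]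

lemma one_le_besselI0 (r : ℝ) : 1 ≤ besselI0 r := by
  have hlinear : ∫ t in (0 : ℝ)..(2 * π), (r * Real.cos t + 1) = 2 * π := by
    rw [intervalIntegral.integral_add (Continuous.intervalIntegrable (by fun_prop) _ _)
      (Continuous.intervalIntegrable (by fun_prop) _ _)]
    simp
  have hmono : ∫ t in (0 : ℝ)..(2 * π), (r * Real.cos t + 1) ≤
      ∫ t in (0 : ℝ)..(2 * π), Real.exp (r * Real.cos t) :=
    intervalIntegral.integral_mono_on two_pi_pos.le
      (Continuous.intervalIntegrable (by fun_prop) _ _)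
      (Continuous.intervalIntegrable (by fun_prop) _ _) fun _ _ ↦ Real.add_one_le_exp _
  rw [besselI0, one_div, ← div_eq_inv_mul, one_le_div two_pi_pos]
  exact hlinear.symm.trans_le hmono

lemma mul_exp_neg_le_radialShift {b : ℝ} (ha : 0 ≤ a) (hy : 0 ≤ y) (hb : 0 ≤ b)
    (hψ : Continuous ψ) (hle : ∀ r, 0 ≤ r → b * Real.exp (-r) ≤ ψ r) :
    b * Real.exp (-a) * Real.exp (-y) ≤ radialShift a ψ y :=
  calc b * Real.exp (-a) * Real.exp (-y)
      = b * Real.exp (-(y + a)) := by rw [mul_assoc, ← Real.exp_add, neg_add_rev]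
    _ ≤ b * radialShift a (fun r ↦ Real.exp (-r)) y := by
        rw [radialShift_exp_neg ha hy]
        gcongr
        exact le_mul_of_one_le_right (Real.exp_nonneg _) (one_le_besselI0 _)
    _ = circleAverage (fun w ↦ b * Real.exp (-‖w - (√a : ℂ)‖ ^ 2)) 0 √y :=
        (circleAverage_fun_smul (𝕜 := ℝ)).symm
    _ ≤ radialShift a ψ y :=
        circleAverage_mono
          (circleIntegrable_comp_norm_sub_sq (ψ := fun r ↦ b * Real.exp (-r)) (by fun_prop) _ _)
          (circleIntegrable_comp_norm_sub_sq hψ _ _) fun _ _ ↦ hle _ (sq_nonneg _)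

end RadialShift

/-- The density on `[0, ∞)` of `‖√I · U + Z‖ ^ 2` (squared Rice distribution), where `U` is uniform
on the unit circle and `Z` is a standard complex Gaussian, whose squared modulus has density
`exp (-r)`. -/
noncomputable def riceDensity (I : ℝ) : ℝ → ℝ := radialShift I fun r ↦ Real.exp (-r)

lemma continuous_riceDensity (I : ℝ) : Continuous (riceDensity I) :=
  continuous_radialShift I (by fun_prop)

lemma riceDensity_nonneg (I r : ℝ) : 0 ≤ riceDensity I r :=
  radialShift_nonneg fun _ _ ↦ Real.exp_nonneg _

lemma lintegral_exp_neg_Ioi_zero :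
    ∫⁻ y in Set.Ioi (0 : ℝ), ENNReal.ofReal (Real.exp (-y)) = 1 := by
  rw [← ofReal_integral_eq_lintegral_ofReal (integrableOn_exp_neg_Ioi 0)
    (ae_of_all _ fun _ ↦ Real.exp_nonneg _), integral_exp_neg_Ioi_zero, ENNReal.ofReal_one]

lemma lintegral_exp_neg_mul_id_Ioi_zero :
    ∫⁻ y in Set.Ioi (0 : ℝ), ENNReal.ofReal (Real.exp (-y)) * ENNReal.ofReal y = 1 := by
  have hint : IntegrableOn (fun y : ℝ ↦ Real.exp (-y) * y) (Set.Ioi 0) := by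
    simpa [show (2 : ℝ) - 1 = 1 by norm_num] using Real.GammaIntegral_convergent two_pos
  have hval : ∫ y in Set.Ioi (0 : ℝ), Real.exp (-y) * y = 1 := by
    simpa [show (2 : ℝ) - 1 = 1 by norm_num] using (Real.Gamma_eq_integral two_pos).symm
  simp only [← ENNReal.ofReal_mul (Real.exp_nonneg _)]
  rw [← ofReal_integral_eq_lintegral_ofReal hint, hval, ENNReal.ofReal_one]
  filter_upwards [ae_restrict_mem measurableSet_Ioi] with y hy
  exact mul_nonneg (Real.exp_nonneg _) (le_of_lt hy)

lemma lintegral_riceDensity (I : ℝ) :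
    ∫⁻ y in Set.Ioi (0 : ℝ), ENNReal.ofReal (riceDensity I y) = 1 :=
  (lintegral_radialShift I (by fun_prop) fun _ _ ↦ Real.exp_nonneg _).trans
    lintegral_exp_neg_Ioi_zero

lemma lintegral_riceDensity_mul_id {I : ℝ} (hI : 0 ≤ I) :
    ∫⁻ y in Set.Ioi (0 : ℝ), ENNReal.ofReal (riceDensity I y) * ENNReal.ofReal y =
      1 + ENNReal.ofReal I := by
  rw [riceDensity, lintegral_radialShift_mul_id hI (by fun_prop) fun _ _ ↦ Real.exp_nonneg _,
    lintegral_exp_neg_Ioi_zero, lintegral_exp_neg_mul_id_Ioi_zero, one_mul]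

section Kernel

variable {I x y : ℝ}

lemma continuous_besselI0 : Continuous besselI0 :=
  continuous_const.mul
    (intervalIntegral.continuous_parametric_intervalIntegral_of_continuous' (by fun_prop) _ _)

lemma continuous_K (I : ℝ) : Continuous fun p : ℝ × ℝ ↦ K I p.1 p.2 := by
  have := continuous_besselI0
  exact continuous_const.mul
    (intervalIntegral.continuous_parametric_intervalIntegral_of_continuous' (by fun_prop) _ _)

lemma continuous_K_left (I y : ℝ) : Continuous fun x ↦ K I x y :=
  (continuous_K I).comp (continuous_id.prodMk continuous_const)

lemma continuous_K_right (I x : ℝ) : Continuous (K I x) :=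
  (continuous_K I).comp (continuous_const.prodMk continuous_id)

lemma K_eq_radialShift (hI : 0 ≤ I) (hx : 0 ≤ x) (hy : 0 ≤ y) :
    K I x y = radialShift x (riceDensity I) y := by
  rw [K, radialShift, circleAverage_eq_integral_neg_pi_pi, smul_eq_mul, one_div]
  congr 2 with θ
  rw [riceDensity, radialShift_exp_neg hI (sq_nonneg _), norm_circleMap_sub_sqrt_sq hx hy]
  ring_nf

lemma K_nonneg (hI : 0 ≤ I) (hx : 0 ≤ x) (hy : 0 ≤ y) : 0 ≤ K I x y := by
  rw [K_eq_radialShift hI hx hy]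
  exact radialShift_nonneg fun _ _ ↦ riceDensity_nonneg I _

lemma K_le_one (hI : 0 ≤ I) (hx : 0 ≤ x) (hy : 0 ≤ y) : K I x y ≤ 1 := by
  rw [K_eq_radialShift hI hx hy]
  exact radialShift_le (continuous_riceDensity I) fun _ _ ↦
    radialShift_le (by fun_prop) fun _ hr ↦ Real.exp_le_one_iff.2 (neg_nonpos.2 hr)

lemma exp_neg_add_le_K (hI : 0 ≤ I) (hx : 0 ≤ x) (hy : 0 ≤ y) :
    Real.exp (-(I + x + y)) ≤ K I x y := by
  have hrice (r : ℝ) (hr : 0 ≤ r) : Real.exp (-I) * Real.exp (-r) ≤ riceDensity I r := by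
    simpa only [one_mul, riceDensity] using
      mul_exp_neg_le_radialShift hI hr zero_le_one (by fun_prop) fun _ _ ↦ (one_mul _).le
  rw [K_eq_radialShift hI hx hy, neg_add, neg_add, Real.exp_add, Real.exp_add]
  exact mul_exp_neg_le_radialShift hx hy (Real.exp_nonneg _) (continuous_riceDensity I) hrice

lemma lintegral_K (hI : 0 ≤ I) (hx : 0 ≤ x) :
    ∫⁻ y in Set.Ioi (0 : ℝ), ENNReal.ofReal (K I x y) = 1 := by
  rw [← lintegral_riceDensity I, ← lintegral_radialShift x (continuous_riceDensity I)
    fun _ _ ↦ riceDensity_nonneg I _]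
  exact setLIntegral_congr_fun measurableSet_Ioi fun y hy ↦ by
    rw [K_eq_radialShift hI hx (le_of_lt hy)]

lemma lintegral_K_mul_id (hI : 0 ≤ I) (hx : 0 ≤ x) :
    ∫⁻ y in Set.Ioi (0 : ℝ), ENNReal.ofReal (K I x y * y) = ENNReal.ofReal (x + I + 1) :=
  calc ∫⁻ y in Set.Ioi (0 : ℝ), ENNReal.ofReal (K I x y * y)
      = ∫⁻ y in Set.Ioi (0 : ℝ),
          ENNReal.ofReal (radialShift x (riceDensity I) y) * ENNReal.ofReal y :=
        setLIntegral_congr_fun measurableSet_Ioi fun y hy ↦ by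
          rw [ENNReal.ofReal_mul (K_nonneg hI hx (le_of_lt hy)),
            K_eq_radialShift hI hx (le_of_lt hy)]
    _ = 1 + ENNReal.ofReal I + ENNReal.ofReal x := by
        rw [lintegral_radialShift_mul_id hx (continuous_riceDensity I)
          fun _ _ ↦ riceDensity_nonneg I _, lintegral_riceDensity_mul_id hI,
          lintegral_riceDensity, one_mul]
    _ = ENNReal.ofReal (x + I + 1) := by
        rw [ENNReal.ofReal_add (by positivity) zero_le_one, ENNReal.ofReal_add hx hI,
          ENNReal.ofReal_one]
        ring

lemma ae_K_nonneg (hI : 0 ≤ I) (hx : 0 ≤ x) : 0 ≤ᵐ[volume.restrict (Set.Ioi 0)] K I x :=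
  ae_restrict_of_forall_mem measurableSet_Ioi fun _ hy ↦ K_nonneg hI hx (le_of_lt hy)

lemma ae_K_mul_id_nonneg (hI : 0 ≤ I) (hx : 0 ≤ x) :
    0 ≤ᵐ[volume.restrict (Set.Ioi 0)] fun y ↦ K I x y * y :=
  ae_restrict_of_forall_mem measurableSet_Ioi fun _ hy ↦
    mul_nonneg (K_nonneg hI hx (le_of_lt hy)) (le_of_lt hy)

lemma integrableOn_K (hI : 0 ≤ I) (hx : 0 ≤ x) : IntegrableOn (K I x) (Set.Ioi 0) :=
  (lintegral_ofReal_ne_top_iff_integrable (continuous_K_right I x).aestronglyMeasurable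
    (ae_K_nonneg hI hx)).1 (lintegral_K hI hx ▸ ENNReal.one_ne_top)

lemma integral_K (hI : 0 ≤ I) (hx : 0 ≤ x) : ∫ y in Set.Ioi (0 : ℝ), K I x y = 1 := by
  rw [integral_eq_lintegral_of_nonneg_ae (ae_K_nonneg hI hx)
    (continuous_K_right I x).aestronglyMeasurable, lintegral_K hI hx, ENNReal.toReal_one]

lemma integrableOn_K_mul_id (hI : 0 ≤ I) (hx : 0 ≤ x) :
    IntegrableOn (fun y ↦ K I x y * y) (Set.Ioi 0) :=
  (lintegral_ofReal_ne_top_iff_integrable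
    ((continuous_K_right I x).mul continuous_id).aestronglyMeasurable
    (ae_K_mul_id_nonneg hI hx)).1 (lintegral_K_mul_id hI hx ▸ ENNReal.ofReal_ne_top)

lemma integral_K_mul_id (hI : 0 ≤ I) (hx : 0 ≤ x) :
    ∫ y in Set.Ioi (0 : ℝ), K I x y * y = x + I + 1 := by
  rw [integral_eq_lintegral_of_nonneg_ae (ae_K_mul_id_nonneg hI hx)
    ((continuous_K_right I x).mul continuous_id).aestronglyMeasurable, lintegral_K_mul_id hI hx,
    ENNReal.toReal_ofReal (by positivity)]

lemma integrableOn_K_mul_add_const (hI : 0 ≤ I) (hx : 0 ≤ x) (c : ℝ) :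
    IntegrableOn (fun y ↦ K I x y * (y + c)) (Set.Ioi 0) := by
  simp only [mul_add]
  exact (integrableOn_K_mul_id hI hx).add ((integrableOn_K hI hx).mul_const c)

lemma integral_K_mul_add_const (hI : 0 ≤ I) (hx : 0 ≤ x) (c : ℝ) :
    ∫ y in Set.Ioi (0 : ℝ), K I x y * (y + c) = x + I + 1 + c := by
  simp only [mul_add]
  rw [integral_add (integrableOn_K_mul_id hI hx) ((integrableOn_K hI hx).mul_const c),
    integral_K_mul_id hI hx, integral_mul_const, integral_K hI hx, one_mul]

end Kernel

section Entropy

variable {I x y : ℝ} {F : Measure ℝ}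

lemma integrable_exp_neg [IsFiniteMeasure F] (hF : ∀ᵐ t ∂F, 0 ≤ t) :
    Integrable (fun t ↦ Real.exp (-t)) F :=
  Integrable.of_bound (C := 1) (by fun_prop) <| hF.mono fun t ht ↦ by
    rwa [Real.norm_of_nonneg (Real.exp_nonneg _), Real.exp_le_one_iff, neg_nonpos]

lemma integrable_K_left [IsFiniteMeasure F] (hI : 0 ≤ I) (hF : ∀ᵐ t ∂F, 0 ≤ t) (hy : 0 ≤ y) :
    Integrable (fun t ↦ K I t y) F :=
  Integrable.of_bound (C := 1) (continuous_K_left I y).aestronglyMeasurable <|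
    hF.mono fun t ht ↦ by
      rw [Real.norm_of_nonneg (K_nonneg hI ht hy)]
      exact K_le_one hI ht hy

lemma measurable_outDen [SFinite F] : Measurable (outDen I F) :=
  ((continuous_K I).stronglyMeasurable.integral_prod_left' (μ := F)).measurable

lemma outDen_nonneg (hI : 0 ≤ I) (hF : ∀ᵐ t ∂F, 0 ≤ t) (hy : 0 ≤ y) : 0 ≤ outDen I F y :=
  integral_nonneg_of_ae <| hF.mono fun _ ht ↦ K_nonneg hI ht hy

lemma outDen_le_one [IsProbabilityMeasure F] (hI : 0 ≤ I) (hF : ∀ᵐ t ∂F, 0 ≤ t) (hy : 0 ≤ y) :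
    outDen I F y ≤ 1 := by
  simpa [outDen] using integral_mono_ae (integrable_K_left hI hF hy) (integrable_const (1 : ℝ))
    (hF.mono fun _ ht ↦ K_le_one hI ht hy)

lemma exp_neg_mul_integral_le_outDen [IsFiniteMeasure F] (hI : 0 ≤ I)
    (hF : ∀ᵐ t ∂F, 0 ≤ t) (hy : 0 ≤ y) :
    Real.exp (-(y + I)) * ∫ t, Real.exp (-t) ∂F ≤ outDen I F y := by
  rw [← integral_const_mul]
  refine integral_mono_ae ((integrable_exp_neg hF).const_mul _) (integrable_K_left hI hF hy)
    (hF.mono fun t ht ↦ ?_)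
  calc Real.exp (-(y + I)) * Real.exp (-t)
      = Real.exp (-(I + t + y)) := by rw [← Real.exp_add]; ring_nf
    _ ≤ K I t y := exp_neg_add_le_K hI ht hy

lemma neg_log_outDen_nonneg [IsProbabilityMeasure F] (hI : 0 ≤ I) (hF : ∀ᵐ t ∂F, 0 ≤ t)
    (hy : 0 ≤ y) : 0 ≤ -Real.log (outDen I F y) :=
  neg_nonneg.2 (Real.log_nonpos (outDen_nonneg hI hF hy) (outDen_le_one hI hF hy))

lemma neg_log_outDen_le [IsFiniteMeasure F] [NeZero F] (hI : 0 ≤ I) (hF : ∀ᵐ t ∂F, 0 ≤ t)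
    (hy : 0 ≤ y) :
    -Real.log (outDen I F y) ≤ y + (I + -Real.log (∫ t, Real.exp (-t) ∂F)) := by
  have hpos : 0 < ∫ t, Real.exp (-t) ∂F := integral_exp_pos (integrable_exp_neg hF)
  have hlog := Real.log_le_log (by positivity) (exp_neg_mul_integral_le_outDen hI hF hy)
  rw [Real.log_mul (Real.exp_ne_zero _) hpos.ne', Real.log_exp] at hlog
  linarith

lemma K_mul_neg_log_outDen_nonneg [IsProbabilityMeasure F] (hI : 0 ≤ I) (hF : ∀ᵐ t ∂F, 0 ≤ t)
    (hx : 0 ≤ x) (hy : 0 ≤ y) : 0 ≤ K I x y * -Real.log (outDen I F y) :=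
  mul_nonneg (K_nonneg hI hx hy) (neg_log_outDen_nonneg hI hF hy)

lemma K_mul_neg_log_outDen_le [IsFiniteMeasure F] [NeZero F] (hI : 0 ≤ I)
    (hF : ∀ᵐ t ∂F, 0 ≤ t) (hx : 0 ≤ x) (hy : 0 ≤ y) :
    K I x y * -Real.log (outDen I F y) ≤
      K I x y * (y + (I + -Real.log (∫ t, Real.exp (-t) ∂F))) :=
  mul_le_mul_of_nonneg_left (neg_log_outDen_le hI hF hy) (K_nonneg hI hx hy)

lemma integrableOn_K_mul_neg_log_outDen [IsProbabilityMeasure F] (hI : 0 ≤ I)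
    (hF : ∀ᵐ t ∂F, 0 ≤ t) (hx : 0 ≤ x) :
    IntegrableOn (fun y ↦ K I x y * -Real.log (outDen I F y)) (Set.Ioi 0) := by
  refine (integrableOn_K_mul_add_const hI hx (I + -Real.log (∫ t, Real.exp (-t) ∂F))).mono'
    ((continuous_K_right I x).measurable.mul measurable_outDen.log.neg).aestronglyMeasurable
    (ae_restrict_of_forall_mem measurableSet_Ioi fun y hy ↦ ?_)
  rw [Real.norm_of_nonneg (K_mul_neg_log_outDen_nonneg hI hF hx (le_of_lt hy))]
  exact K_mul_neg_log_outDen_le hI hF hx (le_of_lt hy)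

lemma margEnt_eq_integral_mul_neg_log (I : ℝ) (F : Measure ℝ) (x : ℝ) :
    margEnt I F x = ∫ y in Set.Ioi (0 : ℝ), K I x y * -Real.log (outDen I F y) := by
  simp only [margEnt, mul_neg, integral_neg]

end Entropy

theorem stmt_6_general {I x : ℝ} (hI : 0 ≤ I) (hx : 0 ≤ x) (F : Measure ℝ)
    [IsProbabilityMeasure F] (hF : ∀ᵐ t ∂F, 0 ≤ t) :
    IntegrableOn (fun y ↦ K I x y * Real.log (outDen I F y)) (Set.Ioi 0) ∧
      0 ≤ margEnt I F x ∧
      margEnt I F x ≤ (x + I + 1) + I + (-Real.log (∫ t, Real.exp (-t) ∂F)) := by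
  have hint := integrableOn_K_mul_neg_log_outDen hI hF hx
  rw [margEnt_eq_integral_mul_neg_log]
  refine ⟨by simpa using hint.neg, ?_, ?_⟩
  · exact setIntegral_nonneg measurableSet_Ioi fun y hy ↦
      K_mul_neg_log_outDen_nonneg hI hF hx (le_of_lt hy)
  · rw [add_assoc, ← integral_K_mul_add_const hI hx]
    exact setIntegral_mono_on hint (integrableOn_K_mul_add_const hI hx _) measurableSet_Ioi
      fun y hy ↦ K_mul_neg_log_outDen_le hI hF hx (le_of_lt hy)

theorem stmt_6 (S I : ℝ) (hS : 0 ≤ S) (hI : 0 ≤ I) (F : Measure ℝ) [IsProbabilityMeasure F]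
    (hsupp : F (Set.Iio 0) = 0) (hmean : (∫ x, x ∂F) ≤ S) (x : ℝ) (hx : 0 ≤ x) :
    0 ≤ margEnt I F x ∧
      margEnt I F x ≤ (x + I + 1) + I + (-Real.log (∫ x', Real.exp (-x') ∂F)) :=
  (stmt_6_general hI hx F <|
    (measure_eq_zero_iff_ae_notMem.1 hsupp).mono fun _ ht ↦ not_lt.1 ht).2
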